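/- Let U ⊆ ℝ⁴ be an open bounded set, star-shaped with respect to the origin, and let N ∈ ℕ. There is a constant C, depending only on N and the diameter of U, with the following property. Let β : U → Alt²(ℝ⁴; ℝ) be a 2-form of class C^{N+1} which is closed (the alternation of its derivative vanishes: Dβ(x)[u](v,w) − Dβ(x)[v](u,w) + Dβ(x)[w](u,v) = 0 for all x,u,v,w) and whose pull-back to the plane P := {x₃ = x₄ = 0} vanishes, i.e. β(x)(e₁,e₂) = 0 for all x ∈ U ∩ P. Then there exists a 1-form α : U → (ℝ⁴)* of class C^N such that: (1) dα = β, i.e. Dα(x)[u](v) − Dα(x)[v](u) = β(x)(u,v) for all x, u, v; (2) α(x) = 0 for every x ∈ U ∩ P; (3) ‖α‖_{C^N(U)} ≤ C ‖β‖_{C^{N+1}(U)}. -/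

import Mathlib

noncomputable abbrev E4 : Type := EuclideanSpace ℝ (Fin 4)

open Set Filter Topology MeasureTheory

lemma pc_bound {E F : Type} [NormedAddCommGroup E] [NormedSpace ℝ E] [ProperSpace E]
    [NormedAddCommGroup F] (Φ : ℝ × E → F) (W : Set (ℝ × E)) (V : Set E)
    (hV : IsOpen V) (hWV : ∀ t ∈ Icc (0:ℝ) 1, ∀ x ∈ V, (t, x) ∈ W) (h : ContinuousOn Φ W)
    (x : E) (hx : x ∈ V) :
    ∃ s ∈ 𝓝 x, s ⊆ V ∧ ∃ B : ℝ, ∀ t ∈ Icc (0:ℝ) 1, ∀ y ∈ s, ‖Φ (t, y)‖ ≤ B := by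
  obtain ⟨ε, hε, hb⟩ := Metric.nhds_basis_closedBall.mem_iff.1 (hV.mem_nhds hx)
  refine ⟨_, Metric.closedBall_mem_nhds x hε, hb, ?_⟩
  have hK : IsCompact (Icc (0:ℝ) 1 ×ˢ Metric.closedBall x ε) :=
    isCompact_Icc.prod (isCompact_closedBall x ε)
  obtain ⟨B, hB⟩ := hK.exists_bound_of_continuousOn
    (h.mono (fun p hp => hWV p.1 hp.1 p.2 (hb hp.2)))
  exact ⟨B, fun t ht y hy => hB (t, y) ⟨ht, hy⟩⟩

lemma pc_cont_t {E F : Type} [NormedAddCommGroup E] [NormedAddCommGroup F] (Φ : ℝ × E → F)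
    (W : Set (ℝ × E)) (V : Set E)
    (hWV : ∀ t ∈ Icc (0:ℝ) 1, ∀ x ∈ V, (t, x) ∈ W) (h : ContinuousOn Φ W)
    (x : E) (hx : x ∈ V) : ContinuousOn (fun t => Φ (t, x)) (Icc (0:ℝ) 1) :=
  h.comp (by fun_prop) (fun t ht => hWV t ht x hx)

lemma pc_meas {E F : Type} [NormedAddCommGroup E] [NormedAddCommGroup F] [NormedSpace ℝ F]
    (Φ : ℝ × E → F)
    (W : Set (ℝ × E)) (V : Set E)
    (hWV : ∀ t ∈ Icc (0:ℝ) 1, ∀ x ∈ V, (t, x) ∈ W) (h : ContinuousOn Φ W)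
    (x : E) (hx : x ∈ V) :
    IntervalIntegrable (fun t => Φ (t, x)) volume 0 1 := by
  apply ContinuousOn.intervalIntegrable
  rw [uIcc_of_le zero_le_one]
  exact pc_cont_t Φ W V hWV h x hx

lemma pc_cont {E F : Type} [NormedAddCommGroup E] [NormedSpace ℝ E] [ProperSpace E]
    [NormedAddCommGroup F] [NormedSpace ℝ F] (Φ : ℝ × E → F) (W : Set (ℝ × E)) (V : Set E)
    (hV : IsOpen V) (hWo : IsOpen W)
    (hWV : ∀ t ∈ Icc (0:ℝ) 1, ∀ x ∈ V, (t, x) ∈ W) (h : ContinuousOn Φ W) :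
    ContinuousOn (fun x => ∫ t in (0:ℝ)..1, Φ (t, x)) V := by
  intro x hx
  apply ContinuousAt.continuousWithinAt
  obtain ⟨s, hs, hsV, B, hB⟩ := pc_bound Φ W V hV hWV h x hx
  have h01 : uIoc (0:ℝ) 1 = Ioc 0 1 := uIoc_of_le zero_le_one
  apply intervalIntegral.continuousAt_of_dominated_interval (bound := fun _ => B)
  · filter_upwards [hs] with y hy
    have := (pc_meas Φ W V hWV h y (hsV hy)).aestronglyMeasurable
    rwa [h01]
  · filter_upwards [hs] with y hy
    refine ae_of_all _ (fun t ht => ?_)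
    rw [h01] at ht
    exact hB t (Ioc_subset_Icc_self ht) y hy
  · exact intervalIntegrable_const
  · refine ae_of_all _ (fun t ht => ?_)
    rw [h01] at ht
    have := h.continuousAt (hWo.mem_nhds (hWV t (Ioc_subset_Icc_self ht) x hx))
    exact ContinuousAt.comp (f := fun y : E => (t, y)) this (by fun_prop)

lemma pc_deriv {E F : Type} [NormedAddCommGroup E] [NormedSpace ℝ E] [ProperSpace E]
    [NormedAddCommGroup F] [NormedSpace ℝ F] (Φ : ℝ × E → F) (W : Set (ℝ × E)) (V : Set E)
    (hV : IsOpen V) (hWo : IsOpen W)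
    (hWV : ∀ t ∈ Icc (0:ℝ) 1, ∀ x ∈ V, (t, x) ∈ W) (h : ContDiffOn ℝ 1 Φ W)
    (x : E) (hx : x ∈ V) :
    HasFDerivAt (fun x => ∫ t in (0:ℝ)..1, Φ (t, x))
      (∫ t in (0:ℝ)..1, (fderiv ℝ Φ (t, x)).comp (ContinuousLinearMap.inr ℝ ℝ E)) x := by
  have hc : ContinuousOn (fun p => (fderiv ℝ Φ p).comp (ContinuousLinearMap.inr ℝ ℝ E)) W :=
    (h.continuousOn_fderiv_of_isOpen hWo le_rfl).clm_comp continuousOn_const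
  obtain ⟨s, hs, hsV, B, hB⟩ := pc_bound _ W V hV hWV hc x hx
  have h01 : uIoc (0:ℝ) 1 = Ioc 0 1 := uIoc_of_le zero_le_one
  apply intervalIntegral.hasFDerivAt_integral_of_dominated_of_fderiv_le
    (F := fun x t => Φ (t, x)) (bound := fun _ => B)
    (F' := fun x t => (fderiv ℝ Φ (t, x)).comp (ContinuousLinearMap.inr ℝ ℝ E)) hs
  · filter_upwards [hs] with y hy
    have := (pc_meas Φ W V hWV h.continuousOn y (hsV hy)).aestronglyMeasurable
    rwa [h01]
  · exact pc_meas Φ W V hWV h.continuousOn x hx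
  · have := (pc_meas _ W V hWV hc x hx).aestronglyMeasurable
    rwa [h01]
  · refine ae_of_all _ (fun t ht y hy => ?_)
    rw [h01] at ht
    exact hB t (Ioc_subset_Icc_self ht) y hy
  · exact intervalIntegrable_const
  · refine ae_of_all _ (fun t ht y hy => ?_)
    rw [h01] at ht
    have h1 : HasFDerivAt Φ (fderiv ℝ Φ (t, y)) (t, y) :=
      ((h.contDiffAt (hWo.mem_nhds
        (hWV t (Ioc_subset_Icc_self ht) y (hsV hy)))).differentiableAt (by simp)).hasFDerivAt
    exact h1.comp y (hasFDerivAt_prodMk_right t y)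

lemma pc_contDiff {E : Type} [NormedAddCommGroup E] [NormedSpace ℝ E] [ProperSpace E]
    (W : Set (ℝ × E)) (V : Set E)
    (hV : IsOpen V) (hWo : IsOpen W)
    (hWV : ∀ t ∈ Icc (0:ℝ) 1, ∀ x ∈ V, (t, x) ∈ W) (n : ℕ) :
    ∀ {F : Type} [NormedAddCommGroup F] [NormedSpace ℝ F] (Φ : ℝ × E → F)
    (_ : ContDiffOn ℝ n Φ W),
    ContDiffOn ℝ n (fun x => ∫ t in (0:ℝ)..1, Φ (t, x)) V := by
  induction n with
  | zero =>
    intro F _ _ Φ h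
    simp only [Nat.cast_zero, contDiffOn_zero] at h ⊢
    exact pc_cont Φ W V hV hWo hWV h
  | succ n ih =>
    intro F _ _ Φ h
    have h1 : ContDiffOn ℝ 1 Φ W := h.of_le (by norm_cast; omega)
    have hd := pc_deriv Φ W V hV hWo hWV h1
    push_cast at h ⊢
    rw [contDiffOn_succ_iff_fderiv_of_isOpen hV]
    refine ⟨fun x hx => (hd x hx).differentiableAt.differentiableWithinAt, by simp, ?_⟩
    have h2 : ContDiffOn ℝ n
        (fun p => (fderiv ℝ Φ p).comp (ContinuousLinearMap.inr ℝ ℝ E)) W :=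
      (((contDiffOn_succ_iff_fderiv_of_isOpen hWo).1 h).2.2).clm_comp contDiffOn_const
    exact (ih _ h2).congr (fun x hx => (hd x hx).fderiv)
set_option linter.unusedSectionVars false

/-- The weighted radial averaging operator. -/
noncomputable def pcT {E F : Type} [NormedAddCommGroup E] [NormedSpace ℝ E]
    [NormedAddCommGroup F] [NormedSpace ℝ F] (k : ℕ) (φ : E → F) (x : E) : F :=
  ∫ t in (0:ℝ)..1, t ^ k • φ (t • x)

section pcTsec

variable {E F G : Type} [NormedAddCommGroup E] [NormedSpace ℝ E] [ProperSpace E]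
    [NormedAddCommGroup F] [NormedSpace ℝ F] [NormedAddCommGroup G] [NormedSpace ℝ G]

lemma pcW_open {U : Set E} (hU : IsOpen U) : IsOpen {p : ℝ × E | p.1 • p.2 ∈ U} :=
  hU.preimage (by fun_prop)

lemma pcW_mem {U : Set E} (hs : StarConvex ℝ 0 U) :
    ∀ t ∈ Icc (0:ℝ) 1, ∀ x ∈ U, (t, x) ∈ {p : ℝ × E | p.1 • p.2 ∈ U} :=
  fun _ ht _ hx => hs.smul_mem hx ht.1 ht.2

lemma pcW_contDiff {U : Set E} {n : ℕ} {φ : E → F} (hφ : ContDiffOn ℝ n φ U) (k : ℕ) :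
    ContDiffOn ℝ n (fun p : ℝ × E => p.1 ^ k • φ (p.1 • p.2)) {p : ℝ × E | p.1 • p.2 ∈ U} := by
  apply ContDiffOn.smul
  · fun_prop
  · exact hφ.comp (by fun_prop) (fun p hp => hp)

lemma pcT_contDiff {U : Set E} (hU : IsOpen U) (hs : StarConvex ℝ 0 U) {n : ℕ} {φ : E → F}
    (hφ : ContDiffOn ℝ n φ U) (k : ℕ) : ContDiffOn ℝ n (pcT k φ) U :=
  pc_contDiff _ U hU (pcW_open hU) (pcW_mem hs) n _ (pcW_contDiff hφ k)

lemma pcT_int {U : Set E} (hs : StarConvex ℝ 0 U) {φ : E → F}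
    (hφ : ContinuousOn φ U) (k : ℕ) {x : E} (hx : x ∈ U) :
    IntervalIntegrable (fun t : ℝ => t ^ k • φ (t • x)) volume 0 1 := by
  have h0 : ContDiffOn ℝ (0 : ℕ) φ U := by simpa using hφ
  exact pc_meas (fun p : ℝ × E => p.1 ^ k • φ (p.1 • p.2)) _ U (pcW_mem hs)
    (pcW_contDiff h0 k).continuousOn x hx

lemma pcT_fderiv {U : Set E} (hU : IsOpen U) (hs : StarConvex ℝ 0 U) {φ : E → F}
    (hφ : ContDiffOn ℝ 1 φ U) (k : ℕ) {x : E} (hx : x ∈ U) :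
    HasFDerivAt (pcT k φ) (pcT (k + 1) (fderiv ℝ φ) x) x := by
  have hc : ContDiffOn ℝ (1:ℕ) φ U := by simpa using hφ
  have h := pc_deriv (fun p : ℝ × E => p.1 ^ k • φ (p.1 • p.2)) _ U hU (pcW_open hU) (pcW_mem hs)
    (by simpa using pcW_contDiff hc k) x hx
  refine h.congr_fderiv (Eq.symm ?_)
  unfold pcT
  apply intervalIntegral.integral_congr
  intro t ht
  rw [uIcc_of_le zero_le_one] at ht
  have htx : t • x ∈ U := hs.smul_mem hx ht.1 ht.2
  have h1 : HasFDerivAt φ (fderiv ℝ φ (t • x)) (t • x) :=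
    ((hφ.contDiffAt (hU.mem_nhds htx)).differentiableAt (by simp)).hasFDerivAt
  have h2 : HasFDerivAt (fun y : E => t ^ k • φ (t • y))
      (t ^ k • (fderiv ℝ φ (t • x)).comp (t • ContinuousLinearMap.id ℝ E)) x :=
    (h1.comp x ((hasFDerivAt_id x).const_smul t)).const_smul (t ^ k)
  have h3 : DifferentiableAt ℝ (fun p : ℝ × E => p.1 ^ k • φ (p.1 • p.2)) (t, x) :=
    ((pcW_contDiff hc k).contDiffAt ((pcW_open hU).mem_nhds htx)).differentiableAt (by simp)
  have h4 := h3.hasFDerivAt.comp x (hasFDerivAt_prodMk_right t x)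
  have h5 := h2.unique h4
  simp only
  rw [← h5]
  ext v
  simp [pow_succ, smul_smul]

lemma pcT_norm {U : Set E} (hs : StarConvex ℝ 0 U) {φ : E → F} {M : ℝ}
    (hM : ∀ y ∈ U, ‖φ y‖ ≤ M) (k : ℕ) {x : E} (hx : x ∈ U) : ‖pcT k φ x‖ ≤ M := by
  have := intervalIntegral.norm_integral_le_of_norm_le_const (a := (0:ℝ)) (b := 1) (C := M)
    (f := fun t : ℝ => t ^ k • φ (t • x)) (fun t ht => ?_)
  · simpa [pcT] using this
  rw [uIoc_of_le zero_le_one] at ht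
  have h1 := hM _ (hs.smul_mem hx ht.1.le ht.2)
  have h2 : t ^ k ≤ 1 := pow_le_one₀ ht.1.le ht.2
  have h3 : 0 ≤ t ^ k := pow_nonneg ht.1.le k
  rw [norm_smul, Real.norm_of_nonneg h3]
  nlinarith [norm_nonneg (φ (t • x))]

lemma pcT_bound {U : Set E} (hU : IsOpen U) (hs : StarConvex ℝ 0 U) (i : ℕ) :
    ∀ {F : Type} [NormedAddCommGroup F] [NormedSpace ℝ F] {φ : E → F} {M : ℝ} (k : ℕ)
    (_ : ContDiffOn ℝ i φ U) (_ : ∀ y ∈ U, ‖iteratedFDeriv ℝ i φ y‖ ≤ M) {x : E} (_ : x ∈ U),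
    ‖iteratedFDeriv ℝ i (pcT k φ) x‖ ≤ M := by
  induction i with
  | zero =>
    intro F _ _ φ M k _ hM x hx
    simp only [norm_iteratedFDeriv_zero] at hM ⊢
    exact pcT_norm hs hM k hx
  | succ i ih =>
    intro F _ _ φ M k hφ hM x hx
    have h1 : ContDiffOn ℝ 1 φ U := hφ.of_le (by norm_cast; omega)
    push_cast at hφ
    have h2 := ((contDiffOn_succ_iff_fderiv_of_isOpen hU).1 hφ).2.2
    rw [← norm_iteratedFDeriv_fderiv]
    have h3 : fderiv ℝ (pcT k φ) =ᶠ[𝓝 x] pcT (k + 1) (fderiv ℝ φ) := by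
      filter_upwards [hU.mem_nhds hx] with y hy
      exact (pcT_fderiv hU hs h1 k hy).fderiv
    rw [(h3.iteratedFDeriv ℝ i).eq_of_nhds]
    refine ih (k + 1) h2 (fun y hy => ?_) hx
    rw [norm_iteratedFDeriv_fderiv]
    exact hM y hy

lemma pcT_clm [CompleteSpace F] [CompleteSpace G] {U : Set E} (hs : StarConvex ℝ 0 U) {φ : E → F}
    (hφ : ContinuousOn φ U) (k : ℕ) {x : E} (hx : x ∈ U) (L : F →L[ℝ] G) :
    L (pcT k φ x) = pcT k (fun y => L (φ y)) x := by
  unfold pcT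
  rw [← L.intervalIntegral_comp_comm (pcT_int hs hφ k hx)]
  simp

lemma pcT_ftc [CompleteSpace F] {U : Set E} (hU : IsOpen U) (hs : StarConvex ℝ 0 U) {φ : E → F}
    (hφ : ContDiffOn ℝ 1 φ U) {x : E} (hx : x ∈ U) :
    pcT 2 (fderiv ℝ φ) x x + (2:ℝ) • pcT 1 φ x = φ x := by
  have hc := hφ.continuousOn_fderiv_of_isOpen hU le_rfl
  have e1 : pcT 2 (fderiv ℝ φ) x x = ∫ t in (0:ℝ)..1, t ^ 2 • fderiv ℝ φ (t • x) x := by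
    unfold pcT
    rw [ContinuousLinearMap.intervalIntegral_apply (pcT_int hs hc 2 hx)]
    simp
  have i1 : IntervalIntegrable (fun t : ℝ => t ^ 2 • fderiv ℝ φ (t • x) x) volume 0 1 := by
    have := pcT_int hs (φ := fun y => fderiv ℝ φ y x) (hc.clm_apply continuousOn_const) 2 hx
    exact this
  have i2 : IntervalIntegrable (fun t : ℝ => (2:ℝ) • t ^ 1 • φ (t • x)) volume 0 1 :=
    (pcT_int hs hφ.continuousOn 1 hx).smul (2:ℝ)
  rw [e1, pcT, ← intervalIntegral.integral_smul, ← intervalIntegral.integral_add i1 i2]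
  rw [intervalIntegral.integral_eq_sub_of_hasDerivAt (f := fun t : ℝ => t ^ 2 • φ (t • x))]
  · simp
  · intro t ht
    rw [uIcc_of_le zero_le_one] at ht
    have htx : t • x ∈ U := hs.smul_mem hx ht.1 ht.2
    have h1 : HasFDerivAt φ (fderiv ℝ φ (t • x)) (t • x) :=
      ((hφ.contDiffAt (hU.mem_nhds htx)).differentiableAt (by simp)).hasFDerivAt
    have h2 : HasDerivAt (fun t : ℝ => t • x) x t := by
      simpa using (hasDerivAt_id t).smul_const x
    have h3 := (hasDerivAt_pow 2 t).smul (h1.comp_hasDerivAt t h2)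
    refine h3.congr_deriv ?_
    simp [smul_smul]
  · exact i1.add i2

end pcTsec

/-- Projection to the normal directions of the plane `x₃ = x₄ = 0`. -/
noncomputable def pcQ : E4 →L[ℝ] E4 :=
  (EuclideanSpace.proj (2 : Fin 4) : E4 →L[ℝ] ℝ).smulRight (EuclideanSpace.single (2 : Fin 4) (1:ℝ)) +
  (EuclideanSpace.proj (3 : Fin 4) : E4 →L[ℝ] ℝ).smulRight (EuclideanSpace.single (3 : Fin 4) (1:ℝ))

lemma pcQ_apply (x : E4) : pcQ x = !₂[0, 0, x 2, x 3] := by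
  ext i
  fin_cases i <;> simp [pcQ]

lemma pcQ_idem (x : E4) : pcQ (pcQ x) = pcQ x := by
  simp [pcQ_apply]

lemma pcQ_zero (x : E4) (h2 : x 2 = 0) (h3 : x 3 = 0) : pcQ x = 0 := by
  rw [pcQ_apply, h2, h3]
  ext i
  fin_cases i <;> simp

lemma pcQ_zero_iff (x : E4) (h : pcQ x = 0) : x 2 = 0 ∧ x 3 = 0 := by
  rw [pcQ_apply] at h
  constructor
  · simpa using congrArg (fun y : E4 => y 2) h
  · simpa using congrArg (fun y : E4 => y 3) h

lemma pcL_norm (t : ℝ) (h0 : 0 ≤ t) (h1 : t ≤ 1) (x : E4) : ‖x - pcQ x + t • pcQ x‖ ≤ ‖x‖ := by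
  rw [EuclideanSpace.norm_eq, EuclideanSpace.norm_eq]
  apply Real.sqrt_le_sqrt
  have ht : t ^ 2 ≤ 1 := by nlinarith
  simp [Fin.sum_univ_four, pcQ_apply]
  nlinarith [sq_nonneg (x 2), sq_nonneg (x 3), mul_nonneg (sub_nonneg.2 ht) (sq_nonneg (x 2)),
    mul_nonneg (sub_nonneg.2 ht) (sq_nonneg (x 3))]

lemma pcQ_norm (x : E4) : ‖pcQ x‖ ≤ ‖x‖ := by
  rw [EuclideanSpace.norm_eq, EuclideanSpace.norm_eq]
  apply Real.sqrt_le_sqrt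
  simp [Fin.sum_univ_four, pcQ_apply]
  nlinarith [sq_nonneg (x 0), sq_nonneg (x 1)]

lemma pcQ_norm_le : ‖pcQ‖ ≤ 1 :=
  ContinuousLinearMap.opNorm_le_bound _ zero_le_one (fun x => by simpa using pcQ_norm x)

lemma pc_bil {E F₁ F₂ G : Type} [NormedAddCommGroup E] [NormedSpace ℝ E]
    [NormedAddCommGroup F₁] [NormedSpace ℝ F₁] [NormedAddCommGroup F₂] [NormedSpace ℝ F₂]
    [NormedAddCommGroup G] [NormedSpace ℝ G] (B : F₁ →L[ℝ] F₂ →L[ℝ] G) (hB : ‖B‖ ≤ 1)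
    {U : Set E} (hU : IsOpen U) {n : ℕ} {f : E → F₁} {g : E → F₂} (hf : ContDiffOn ℝ n f U)
    (hg : ContDiffOn ℝ n g U) {Mf Mg : ℝ} (hM : 0 ≤ Mf)
    (hMf : ∀ x ∈ U, ∀ i ≤ n, ‖iteratedFDeriv ℝ i f x‖ ≤ Mf)
    (hMg : ∀ x ∈ U, ∀ i ≤ n, ‖iteratedFDeriv ℝ i g x‖ ≤ Mg) :
    ∀ x ∈ U, ∀ i ≤ n, ‖iteratedFDeriv ℝ i (fun y => B (f y) (g y)) x‖ ≤ 2 ^ n * (Mf * Mg) := by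
  intro x hx i hi
  have h0 : 0 ≤ Mg := (norm_nonneg _).trans (hMg x hx i hi)
  have h := B.norm_iteratedFDerivWithin_le_of_bilinear_of_le_one hf hg hU.uniqueDiffOn hx
    (n := i) (by exact_mod_cast hi) hB
  rw [iteratedFDerivWithin_of_isOpen i hU hx] at h
  refine h.trans ?_
  calc _ ≤ ∑ j ∈ Finset.range (i + 1), (i.choose j : ℝ) * (Mf * Mg) := by
        apply Finset.sum_le_sum
        intro j hj
        have hj' : j ≤ i := by simpa [Nat.lt_succ_iff] using hj
        rw [iteratedFDerivWithin_of_isOpen j hU hx, iteratedFDerivWithin_of_isOpen (i - j) hU hx,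
          mul_assoc]
        gcongr
        · exact hMf x hx j (hj'.trans hi)
        · exact hMg x hx (i - j) (by omega)
    _ = 2 ^ i * (Mf * Mg) := by
        rw [← Finset.sum_mul]
        congr 1
        exact_mod_cast Nat.sum_range_choose i
    _ ≤ 2 ^ n * (Mf * Mg) := by
        gcongr
        norm_num

lemma pc_lin {E F : Type} [NormedAddCommGroup E] [NormedSpace ℝ E]
    [NormedAddCommGroup F] [NormedSpace ℝ F] (L : E →L[ℝ] F) (hL : ‖L‖ ≤ 1) {D : ℝ} (hD : 1 ≤ D)
    (x : E) (hx : ‖x‖ ≤ D) (i : ℕ) : ‖iteratedFDeriv ℝ i (fun y => L y) x‖ ≤ D := by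
  rcases i with _ | i
  · rw [norm_iteratedFDeriv_zero]
    exact (L.le_of_opNorm_le hL x).trans (by simpa using hx)
  · rw [← norm_iteratedFDeriv_fderiv]
    have : fderiv ℝ (fun y => L y) = fun _ => L := by
      ext1 y; exact L.fderiv
    rw [this]
    rcases i with _ | i
    · rw [norm_iteratedFDeriv_zero]; exact hL.trans hD
    · rw [iteratedFDeriv_const_of_ne (by omega)]
      simp
      linarith

/-- The standard Poincaré primitive. -/
noncomputable def pcA (β : E4 → E4 →L[ℝ] E4 →L[ℝ] ℝ) (x : E4) : E4 →L[ℝ] ℝ := pcT 1 β x x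

section pcAsec
set_option maxSynthPendingDepth 3
variable {U : Set E4} (hU : IsOpen U) (hs : StarConvex ℝ 0 U)
  {β : E4 → E4 →L[ℝ] E4 →L[ℝ] ℝ}

include hU hs in
lemma pcA_contDiff {n : ℕ} (hβ : ContDiffOn ℝ n β U) : ContDiffOn ℝ n (pcA β) U :=
  (pcT_contDiff hU hs hβ 1).clm_apply contDiffOn_id

include hs in
lemma pcT_alt (hβ : ContinuousOn β U) (k : ℕ) (halt : ∀ x ∈ U, ∀ u v : E4, β x u v = -β x v u)
    (x : E4) (hx : x ∈ U) (u v : E4) : pcT k β x u v = - pcT k β x v u := by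
  let ev : E4 → E4 → (E4 →L[ℝ] E4 →L[ℝ] ℝ) →L[ℝ] ℝ := fun u v =>
    (ContinuousLinearMap.apply ℝ ℝ v).comp (ContinuousLinearMap.apply ℝ (E4 →L[ℝ] ℝ) u)
  have h := pcT_clm (F := E4 →L[ℝ] E4 →L[ℝ] ℝ) (G := ℝ) hs hβ k hx (ev u v + ev v u)
  have h2 : pcT k (fun y => (ev u v + ev v u) (β y)) x = 0 := by
    unfold pcT
    rw [intervalIntegral.integral_congr (g := fun _ => (0:ℝ))]
    · simp
    · intro t ht
      rw [uIcc_of_le zero_le_one] at ht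
      simp [ev, halt _ (hs.smul_mem hx ht.1 ht.2) u v]
  rw [h2] at h
  simp [ev] at h
  linarith

include hs in
lemma pcA_plane (hβ : ContinuousOn β U)
    (halt : ∀ x ∈ U, ∀ u v : E4, β x u v = -β x v u)
    (hP : ∀ x ∈ U, x 2 = 0 → x 3 = 0 →
            β x (EuclideanSpace.single (0 : Fin 4) (1:ℝ)) (EuclideanSpace.single (1 : Fin 4) (1:ℝ)) = 0)
    (x : E4) (hx : x ∈ U) (hxQ : pcQ x = 0) (v : E4) (hv : pcQ v = 0) : pcA β x v = 0 := by
  let ev : E4 → E4 → (E4 →L[ℝ] E4 →L[ℝ] ℝ) →L[ℝ] ℝ := fun u v =>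
    (ContinuousLinearMap.apply ℝ ℝ v).comp (ContinuousLinearMap.apply ℝ (E4 →L[ℝ] ℝ) u)
  obtain ⟨hx2, hx3⟩ := pcQ_zero_iff x hxQ
  obtain ⟨hv2, hv3⟩ := pcQ_zero_iff v hv
  set e0 : E4 := EuclideanSpace.single (0 : Fin 4) (1:ℝ) with he0
  set e1 : E4 := EuclideanSpace.single (1 : Fin 4) (1:ℝ) with he1
  have h01 : pcT 1 β x e0 e1 = 0 := by
    have h := pcT_clm (F := E4 →L[ℝ] E4 →L[ℝ] ℝ) (G := ℝ) hs hβ 1 hx (ev e0 e1)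
    have h2 : pcT 1 (fun y => (ev e0 e1) (β y)) x = 0 := by
      unfold pcT
      rw [intervalIntegral.integral_congr (g := fun _ => (0:ℝ))]
      · simp
      · intro t ht
        rw [uIcc_of_le zero_le_one] at ht
        have := hP _ (hs.smul_mem hx ht.1 ht.2) (by simp [hx2]) (by simp [hx3])
        simp [ev, this]
    rw [h2] at h
    simpa [ev] using h
  have hA := pcT_alt hs hβ 1 halt x hx
  have h00 : pcT 1 β x e0 e0 = 0 := by linarith [hA e0 e0]
  have h11 : pcT 1 β x e1 e1 = 0 := by linarith [hA e1 e1]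
  have h10 : pcT 1 β x e1 e0 = 0 := by linarith [hA e1 e0]
  have dec : ∀ w : E4, w 2 = 0 → w 3 = 0 → w = w 0 • e0 + w 1 • e1 := by
    intro w h2 h3
    ext i
    fin_cases i <;> simp [he0, he1, h2, h3]
  unfold pcA
  generalize pcT 1 β x = b at *
  rw [dec x hx2 hx3, dec v hv2 hv3]
  simp [h00, h01, h10, h11]

include hU hs in
lemma pcA_hasFDerivAt (hβ : ContDiffOn ℝ 1 β U) (x : E4) (hx : x ∈ U) (u v : E4) :
    fderiv ℝ (pcA β) x u v = pcT 2 (fderiv ℝ β) x u x v + pcT 1 β x u v := by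
  have h := (pcT_fderiv hU hs hβ 1 hx).clm_apply (hasFDerivAt_id x)
  have h' : HasFDerivAt (pcA β) _ x := h
  rw [h'.fderiv]
  simp
  ring

include hU hs in
lemma pcA_d (hβ : ContDiffOn ℝ 1 β U) (halt : ∀ x ∈ U, ∀ u v : E4, β x u v = -β x v u)
    (hcl : ∀ x ∈ U, ∀ u v w : E4,
            fderiv ℝ β x u v w - fderiv ℝ β x v u w + fderiv ℝ β x w u v = 0)
    (x : E4) (hx : x ∈ U) (u v : E4) :
    fderiv ℝ (pcA β) x u v - fderiv ℝ (pcA β) x v u = β x u v := by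
  rw [pcA_hasFDerivAt hU hs hβ x hx, pcA_hasFDerivAt hU hs hβ x hx]
  let ev : E4 → E4 → E4 → (E4 →L[ℝ] E4 →L[ℝ] E4 →L[ℝ] ℝ) →L[ℝ] ℝ := fun w u v =>
    (ContinuousLinearMap.apply ℝ ℝ v).comp
    ((ContinuousLinearMap.apply ℝ (E4 →L[ℝ] ℝ) u).comp
      (ContinuousLinearMap.apply ℝ (E4 →L[ℝ] E4 →L[ℝ] ℝ) w))
  have hc := hβ.continuousOn_fderiv_of_isOpen hU le_rfl
  have hanti : ∀ y ∈ U, ∀ w u v : E4, fderiv ℝ β y w u v = - fderiv ℝ β y w v u := by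
    intro y hy w u v
    have hd : HasFDerivAt β (fderiv ℝ β y) y :=
      ((hβ.contDiffAt (hU.mem_nhds hy)).differentiableAt (by simp)).hasFDerivAt
    have h1 := (hd.clm_apply (hasFDerivAt_const u y)).clm_apply (hasFDerivAt_const v y)
    have h2 := ((hd.clm_apply (hasFDerivAt_const v y)).clm_apply (hasFDerivAt_const u y)).neg
    have h3 := h1.congr_of_eventuallyEq (f₁ := fun z => -β z v u) (by
      filter_upwards [hU.mem_nhds hy] with z hz
      rw [halt z hz u v])
    have h4 := congrArg (fun L : E4 →L[ℝ] ℝ => L w) (h3.unique h2)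
    simpa using h4
  have h := pcT_clm (F := E4 →L[ℝ] E4 →L[ℝ] E4 →L[ℝ] ℝ) (G := ℝ) hs hc 2 hx (ev u x v - ev v x u - ev x u v)
  have h2 : pcT 2 (fun y => (ev u x v - ev v x u - ev x u v) (fderiv ℝ β y)) x = 0 := by
    unfold pcT
    rw [intervalIntegral.integral_congr (g := fun _ => (0:ℝ))]
    · simp
    · intro t ht
      rw [uIcc_of_le zero_le_one] at ht
      have hy := hs.smul_mem hx ht.1 ht.2
      have e1 := hcl _ hy u x v
      have e2 := hanti _ hy v x u
      simp only [ev, ContinuousLinearMap.sub_apply, ContinuousLinearMap.comp_apply,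
        ContinuousLinearMap.apply_apply, smul_eq_mul]
      have : fderiv ℝ β (t • x) u x v - fderiv ℝ β (t • x) v x u - fderiv ℝ β (t • x) x u v = 0 := by
        linarith
      rw [this, mul_zero]
  rw [h2] at h
  simp only [ev, ContinuousLinearMap.sub_apply, ContinuousLinearMap.comp_apply,
        ContinuousLinearMap.apply_apply] at h
  have hf := congrArg (fun L : E4 →L[ℝ] E4 →L[ℝ] ℝ => L u v) (pcT_ftc hU hs hβ hx)
  simp only [ContinuousLinearMap.add_apply, ContinuousLinearMap.smul_apply, smul_eq_mul] at hf
  have ha := pcT_alt hs hβ.continuousOn 1 halt x hx u v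
  linarith

end pcAsec

section pcDsec
set_option maxSynthPendingDepth 3

lemma pc_correct {U : Set E4} (hU : IsOpen U) {β : E4 → E4 →L[ℝ] E4 →L[ℝ] ℝ} {a : E4 → E4 →L[ℝ] ℝ}
    {f : E4 → ℝ} (ha : ContDiffOn ℝ 1 a U)
    (hd : ∀ x ∈ U, ∀ u v : E4, fderiv ℝ a x u v - fderiv ℝ a x v u = β x u v)
    (hf : ContDiffOn ℝ 2 f U) (x : E4) (hx : x ∈ U) (u v : E4) :
    fderiv ℝ (fun y => a y - fderiv ℝ f y) x u v - fderiv ℝ (fun y => a y - fderiv ℝ f y) x v u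
      = β x u v := by
  have hfx : ContDiffAt ℝ 2 f x := hf.contDiffAt (hU.mem_nhds hx)
  have h1 : DifferentiableAt ℝ (fderiv ℝ f) x :=
    (hfx.fderiv_right (m := 1) (by norm_num)).differentiableAt (by simp)
  have h2 : DifferentiableAt ℝ a x := (ha.contDiffAt (hU.mem_nhds hx)).differentiableAt (by simp)
  have hsym : IsSymmSndFDerivAt ℝ f x := hfx.isSymmSndFDerivAt (by simp)
  rw [fderiv_fun_sub h2 h1]
  have := hsym u v
  have := hd x hx u v
  simp
  linarith

lemma pc_mem_norm {U : Set E4} (hb : Bornology.IsBounded U) (hs : StarConvex ℝ 0 U) {d : ℝ}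
    (hd : Metric.diam U ≤ d) (x : E4) (hx : x ∈ U) : ‖x‖ ≤ |d| + 1 := by
  have h0 : (0 : E4) ∈ U := by simpa using hs.smul_mem hx le_rfl zero_le_one
  have := Metric.dist_le_diam_of_mem hb hx h0
  rw [dist_zero_right] at this
  linarith [le_abs_self d]

lemma pcA_bound {U : Set E4} (hU : IsOpen U) (hs : StarConvex ℝ 0 U) {D : ℝ} (hD : 1 ≤ D)
    (hUD : ∀ x ∈ U, ‖x‖ ≤ D) {n : ℕ}
    {β : E4 → E4 →L[ℝ] E4 →L[ℝ] ℝ} (hβ : ContDiffOn ℝ n β U) {M : ℝ} (hM0 : 0 ≤ M)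
    (hM : ∀ x ∈ U, ∀ i ≤ n, ‖iteratedFDeriv ℝ i β x‖ ≤ M) :
    ∀ x ∈ U, ∀ i ≤ n, ‖iteratedFDeriv ℝ i (pcA β) x‖ ≤ 2 ^ n * (M * D) := by
  exact pc_bil (ContinuousLinearMap.id ℝ (E4 →L[ℝ] E4 →L[ℝ] ℝ)) ContinuousLinearMap.norm_id_le hU
    (pcT_contDiff hU hs hβ 1) contDiffOn_id hM0
    (fun x hx i hi => pcT_bound hU hs i 1 (hβ.of_le (by exact_mod_cast hi))
      (fun y hy => hM y hy i hi) hx)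
    (fun x hx i hi => pc_lin (ContinuousLinearMap.id ℝ E4) ContinuousLinearMap.norm_id_le hD x
      (hUD x hx) i)

theorem pc_main_pos (N : ℕ) (hN : 1 ≤ N) (d : ℝ) :
    ∃ C : ℝ, 0 < C ∧
      ∀ U : Set E4, IsOpen U → Bornology.IsBounded U → StarConvex ℝ 0 U →
        Metric.diam U ≤ d →
        ∀ β : E4 → E4 →L[ℝ] E4 →L[ℝ] ℝ,
          ContDiffOn ℝ (N + 1) β U →
          (∀ x ∈ U, ∀ u v : E4, β x u v = -β x v u) →
          (∀ x ∈ U, ∀ u v w : E4,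
            fderiv ℝ β x u v w - fderiv ℝ β x v u w + fderiv ℝ β x w u v = 0) →
          (∀ x ∈ U, x 2 = 0 → x 3 = 0 →
            β x (EuclideanSpace.single (0 : Fin 4) (1:ℝ)) (EuclideanSpace.single (1 : Fin 4) (1:ℝ)) = 0) →
          ∃ α : E4 → E4 →L[ℝ] ℝ,
            ContDiffOn ℝ N α U ∧
            (∀ x ∈ U, ∀ u v : E4,
              fderiv ℝ α x u v - fderiv ℝ α x v u = β x u v) ∧
            (∀ x ∈ U, x 2 = 0 → x 3 = 0 → α x = 0) ∧
            (∀ M : ℝ, (∀ x ∈ U, ∀ i ≤ N + 1, ‖iteratedFDeriv ℝ i β x‖ ≤ M) →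
              ∀ x ∈ U, ∀ i ≤ N, ‖iteratedFDeriv ℝ i α x‖ ≤ C * M) := by
  set D : ℝ := |d| + 1 with hDdef
  have hD : 1 ≤ D := by have := abs_nonneg d; linarith
  refine ⟨2 ^ (N + 1) * D + 2 ^ (N + 1) * (2 ^ (N + 1) * D * D), by positivity, ?_⟩
  intro U hU hb hs hd β hβ halt hcl hP
  have hUD := pc_mem_norm hb hs hd
  have hβn : ContDiffOn ℝ ((N + 1 : ℕ) : WithTop ℕ∞) β U := by exact_mod_cast hβ
  have hβ1 : ContDiffOn ℝ 1 β U := hβn.of_le (by norm_cast; omega)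
  have ha := pcA_contDiff hU hs hβn
  have hf : ContDiffOn ℝ ((N + 1 : ℕ) : WithTop ℕ∞) (fun x => pcA β x (pcQ x)) U :=
    ha.clm_apply pcQ.contDiff.contDiffOn
  have hf' : ContDiffOn ℝ N (fderiv ℝ (fun x => pcA β x (pcQ x))) U := by
    have hf2 := hf
    push_cast at hf2
    exact ((contDiffOn_succ_iff_fderiv_of_isOpen hU).1 hf2).2.2
  have haN : ContDiffOn ℝ N (pcA β) U := ha.of_le (by norm_cast; omega)
  refine ⟨fun x => pcA β x - fderiv ℝ (fun x => pcA β x (pcQ x)) x, haN.sub hf', ?_, ?_, ?_⟩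
  · exact pc_correct hU (ha.of_le (by norm_cast; omega)) (pcA_d hU hs hβ1 halt hcl)
      (hf.of_le (by norm_cast; omega))
  · intro x hx h2 h3
    have hQ := pcQ_zero x h2 h3
    have hdx : HasFDerivAt (pcA β) (fderiv ℝ (pcA β) x) x :=
      ((ha.contDiffAt (hU.mem_nhds hx)).differentiableAt (by simp)).hasFDerivAt
    have h := hdx.clm_apply (pcQ.hasFDerivAt (x := x))
    beta_reduce
    rw [h.fderiv]
    ext v
    have h4 := pcA_plane hs hβ1.continuousOn halt hP x hx hQ (v - pcQ v) (by
      rw [map_sub, pcQ_idem, sub_self])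
    rw [map_sub] at h4
    simp [hQ, h4]
  · intro M hM x hx i hi
    have hM0 : 0 ≤ M := (norm_nonneg _).trans (hM x hx 0 (by omega))
    have b1 := pcA_bound hU hs hD hUD hβn hM0 hM
    have b2 := pc_bil (ContinuousLinearMap.id ℝ (E4 →L[ℝ] ℝ)) ContinuousLinearMap.norm_id_le hU
      ha (pcQ.contDiff.contDiffOn) (by positivity) b1
      (fun x hx i hi => pc_lin pcQ pcQ_norm_le hD x (hUD x hx) i)
    have hc1 : ContDiffAt ℝ i (pcA β) x :=
      (haN.contDiffAt (hU.mem_nhds hx)).of_le (by exact_mod_cast hi)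
    have hc2 : ContDiffAt ℝ i (fderiv ℝ (fun x => pcA β x (pcQ x))) x :=
      (hf'.contDiffAt (hU.mem_nhds hx)).of_le (by exact_mod_cast hi)
    have e : iteratedFDeriv ℝ i (fun x => pcA β x - fderiv ℝ (fun x => pcA β x (pcQ x)) x) x
      = iteratedFDeriv ℝ i (pcA β) x -
        iteratedFDeriv ℝ i (fderiv ℝ (fun x => pcA β x (pcQ x))) x :=
      iteratedFDeriv_sub_apply hc1 hc2
    rw [e]
    refine (norm_sub_le _ _).trans ?_
    rw [norm_iteratedFDeriv_fderiv]
    have c1 := b1 x hx i (by omega)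
    have c2 := b2 x hx (i + 1) (by omega)
    simp only [ContinuousLinearMap.id_apply] at c2
    calc _ ≤ _ := add_le_add c1 c2
      _ = _ := by ring

end pcDsec

section pcEsec
set_option maxSynthPendingDepth 3

lemma pc_exists_s {U : Set E4} (hU : IsOpen U) (hb : Bornology.IsBounded U) :
    ∃ s : E4 → ℝ, ContDiff ℝ 2 s ∧ (∀ x, 0 ≤ s x) ∧ (∀ x, x ∈ U ↔ s x ≠ 0) ∧
      (∀ x y, |s x - s y| ≤ ‖x - y‖) ∧ ∀ x, ‖fderiv ℝ s x‖ ≤ 1 := by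
  obtain ⟨f, hf, hc, hr⟩ := hU.exists_contDiff_support_eq (n := 2)
  have hc2 : ContDiff ℝ 2 f := by exact_mod_cast hc
  have hcs : HasCompactSupport f := by
    unfold HasCompactSupport tsupport
    rw [hf]
    exact hb.isCompact_closure
  obtain ⟨C, hC⟩ := (hc2.of_le (by norm_num : (1 : WithTop ℕ∞) ≤ 2)).lipschitzWith_of_hasCompactSupport hcs (by simp)
  have hC0 : (0:ℝ) < C + 1 := by positivity
  have hlip : LipschitzWith 1 (fun x => ((C:ℝ) + 1)⁻¹ * f x) := by
    apply LipschitzWith.of_dist_le_mul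
    intro x y
    have := hC.dist_le_mul x y
    rw [Real.dist_eq] at this ⊢
    rw [← mul_sub, abs_mul, abs_of_pos (inv_pos.2 hC0), inv_mul_le_iff₀ hC0]
    have h2 : 0 ≤ dist x y := dist_nonneg
    simp
    nlinarith
  refine ⟨fun x => ((C:ℝ) + 1)⁻¹ * f x, contDiff_const.mul hc2, ?_, ?_, ?_, ?_⟩
  · intro x
    have := (hr ⟨x, rfl⟩).1
    positivity
  · intro x
    rw [← hf, Function.mem_support]
    simp [hC0.ne']
  · intro x y
    have := hlip.dist_le_mul x y
    rw [Real.dist_eq, dist_eq_norm] at this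
    simpa using this
  · intro x
    simpa using norm_fderiv_le_of_lipschitz ℝ hlip

/-- The one-dimensional cutoff profile. -/
noncomputable def pcPsi (r : ℝ) : ℝ := Real.smoothTransition (2 - 4 * r)

lemma pcPsi_contDiff : ContDiff ℝ 2 pcPsi := by
  unfold pcPsi
  exact Real.smoothTransition.contDiff.comp (by fun_prop)

lemma pcPsi_bound : ∃ K : ℝ, 0 ≤ K ∧ ∀ r ∈ Icc (0:ℝ) 1, |deriv pcPsi r| ≤ K := by
  have hc : Continuous (deriv pcPsi) := pcPsi_contDiff.continuous_deriv (by norm_num)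
  obtain ⟨K, hK⟩ := isCompact_Icc.exists_bound_of_continuousOn (s := Icc (0:ℝ) 1) hc.continuousOn
  exact ⟨K, (norm_nonneg _).trans (hK 0 (by simp)), fun r hr => hK r hr⟩

/-- The retraction onto the plane. -/
noncomputable def pcL (t : ℝ) : E4 →L[ℝ] E4 := ContinuousLinearMap.id ℝ E4 - pcQ + t • pcQ

lemma pcL_apply (t : ℝ) (x : E4) : pcL t x = x - pcQ x + t • pcQ x := by
  simp [pcL]

lemma pcL_norm_le (t : ℝ) (ht : t ∈ Icc (0:ℝ) 1) : ‖pcL t‖ ≤ 1 :=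
  ContinuousLinearMap.opNorm_le_bound _ zero_le_one (fun x => by
    rw [pcL_apply, one_mul]; exact pcL_norm t ht.1 ht.2 x)

lemma pcL_contDiff {n : WithTop ℕ∞} : ContDiff ℝ n (fun p : ℝ × E4 => pcL p.1 p.2) := by
  simp only [pcL_apply]
  fun_prop

lemma pcL_contDiff' {n : WithTop ℕ∞} : ContDiff ℝ n (fun p : ℝ × E4 => pcL p.1) := by
  unfold pcL
  fun_prop

/-- Local potential. -/
noncomputable def pcF (a : E4 → E4 →L[ℝ] ℝ) (x : E4) : ℝ :=
  ∫ t in (0:ℝ)..1, a (pcL t x) (pcQ x)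

/-- Local primitive vanishing on the plane. -/
noncomputable def pcAloc (β : E4 → E4 →L[ℝ] E4 →L[ℝ] ℝ) (x : E4) : E4 →L[ℝ] ℝ :=
  ∫ t in (0:ℝ)..1, (β (pcL t x) (pcQ x)).comp (pcL t)

section
variable {U V : Set E4} (hU : IsOpen U) (hV : IsOpen V)
  (hVU : ∀ t ∈ Icc (0:ℝ) 1, ∀ x ∈ V, pcL t x ∈ U)
  {β : E4 → E4 →L[ℝ] E4 →L[ℝ] ℝ} {a : E4 → E4 →L[ℝ] ℝ}

include hU in
lemma pcLW_open : IsOpen {p : ℝ × E4 | pcL p.1 p.2 ∈ U} :=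
  hU.preimage (pcL_contDiff (n := 0)).continuous

lemma pcAloc_aux (hβ : ContDiffOn ℝ 1 β U) :
    ContDiffOn ℝ 1 (fun p : ℝ × E4 => (β (pcL p.1 p.2) (pcQ p.2)).comp (pcL p.1))
      {p : ℝ × E4 | pcL p.1 p.2 ∈ U} := by
  apply ContDiffOn.clm_comp
  · apply ContDiffOn.clm_apply
    · exact hβ.comp pcL_contDiff.contDiffOn (fun p hp => hp)
    · exact (by fun_prop : ContDiff ℝ 1 (fun p : ℝ × E4 => pcQ p.2)).contDiffOn
  · exact pcL_contDiff'.contDiffOn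

lemma pcF_aux (ha : ContDiffOn ℝ 1 a U) :
    ContDiffOn ℝ 1 (fun p : ℝ × E4 => a (pcL p.1 p.2) (pcQ p.2))
      {p : ℝ × E4 | pcL p.1 p.2 ∈ U} := by
  apply ContDiffOn.clm_apply
  · exact ha.comp pcL_contDiff.contDiffOn (fun p hp => hp)
  · exact (by fun_prop : ContDiff ℝ 1 (fun p : ℝ × E4 => pcQ p.2)).contDiffOn

include hU hV hVU in
lemma pcAloc_contDiff (hβ : ContDiffOn ℝ 1 β U) : ContDiffOn ℝ 1 (pcAloc β) V := by
  have := pc_contDiff _ V hV (pcLW_open hU) hVU 1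
    (fun p : ℝ × E4 => (β (pcL p.1 p.2) (pcQ p.2)).comp (pcL p.1))
    (by exact_mod_cast pcAloc_aux hβ)
  exact_mod_cast this

include hU hV hVU in
lemma pcF_deriv (hβ : ContDiffOn ℝ 1 β U) (ha : ContDiffOn ℝ 1 a U)
    (hd : ∀ x ∈ U, ∀ u v : E4, fderiv ℝ a x u v - fderiv ℝ a x v u = β x u v)
    (haP : ∀ x ∈ U, pcQ x = 0 → ∀ v, pcQ v = 0 → a x v = 0) (x : E4) (hx : x ∈ V) :
    HasFDerivAt (pcF a) (a x - pcAloc β x) x := by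
  have hd0 := pc_deriv _ _ V hV (pcLW_open hU) hVU (pcF_aux ha) x hx
  have hfc := ((pcF_aux ha).continuousOn_fderiv_of_isOpen (pcLW_open hU) le_rfl).clm_comp
    (continuousOn_const (c := ContinuousLinearMap.inr ℝ ℝ E4))
  have hi1 := pc_meas _ _ V hVU hfc x hx
  have hi2 := pc_meas _ _ V hVU (pcAloc_aux hβ).continuousOn x hx
  refine HasFDerivAt.congr_fderiv (f := pcF a) hd0 ?_
  rw [eq_sub_iff_add_eq]
  unfold pcAloc
  rw [← intervalIntegral.integral_add hi1 hi2]
  ext v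
  have hi3 := hi1.add hi2
  rw [ContinuousLinearMap.intervalIntegral_apply hi3]
  rw [intervalIntegral.integral_eq_sub_of_hasDerivAt (f := fun t : ℝ => a (pcL t x) (pcL t v))]
  · have hx1 : pcL 1 x = x := by rw [pcL_apply]; simp
    have hv1 : pcL 1 v = v := by rw [pcL_apply]; simp
    have hq : ∀ w, pcQ (pcL 0 w) = 0 := by
      intro w; rw [pcL_apply]; simp [pcQ_idem]
    rw [hx1, hv1, haP (pcL 0 x) (hVU 0 (by simp) x hx) (hq x) _ (hq v), sub_zero]
  · intro t ht
    rw [uIcc_of_le zero_le_one] at ht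
    have hy := hVU t ht x hx
    have hda : HasFDerivAt a (fderiv ℝ a (pcL t x)) (pcL t x) :=
      ((ha.contDiffAt (hU.mem_nhds hy)).differentiableAt (by simp)).hasFDerivAt
    have hl : ∀ w, HasDerivAt (fun t : ℝ => pcL t w) (pcQ w) t := by
      intro w
      simp only [pcL_apply]
      simpa using ((hasDerivAt_id t).smul_const (pcQ w)).const_add (w - pcQ w)
    have hc : HasDerivAt (fun t : ℝ => a (pcL t x)) (fderiv ℝ a (pcL t x) (pcQ x)) t :=
      HasFDerivAt.comp_hasDerivAt t hda (hl x)
    have h1 : HasDerivAt (fun t : ℝ => a (pcL t x) (pcL t v))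
        (fderiv ℝ a (pcL t x) (pcQ x) (pcL t v) + a (pcL t x) (pcQ v)) t :=
      hc.clm_apply (hl v)
    refine h1.congr_deriv ?_
    have h2 : HasFDerivAt (fun y : E4 => a (pcL t y) (pcQ y))
        ((a (pcL t x)).comp pcQ + ((fderiv ℝ a (pcL t x)).comp (pcL t)).flip (pcQ x)) x :=
      (HasFDerivAt.comp x hda (pcL t).hasFDerivAt).clm_apply pcQ.hasFDerivAt
    have h3 : DifferentiableAt ℝ (fun p : ℝ × E4 => a (pcL p.1 p.2) (pcQ p.2)) (t, x) :=
      ((pcF_aux ha).contDiffAt ((pcLW_open hU).mem_nhds hy)).differentiableAt (by simp)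
    have h4 : HasFDerivAt (fun y : E4 => a (pcL t y) (pcQ y))
        ((fderiv ℝ (fun p : ℝ × E4 => a (pcL p.1 p.2) (pcQ p.2)) (t, x)).comp
          (ContinuousLinearMap.inr ℝ ℝ E4)) x :=
      HasFDerivAt.comp x h3.hasFDerivAt (hasFDerivAt_prodMk_right t x)
    have h5 := h2.unique h4
    beta_reduce
    rw [← h5]
    have h6 := hd _ hy (pcQ x) (pcL t v)
    simp
    linarith
  · have := (ContinuousLinearMap.apply ℝ ℝ v).integrable_comp hi3.1
    rw [intervalIntegrable_iff_integrableOn_Ioc_of_le zero_le_one]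
    exact this

include hVU in
lemma pcF_norm {A : ℝ} (hA : ∀ y ∈ U, ‖a y‖ ≤ A) (x : E4) (hx : x ∈ V) :
    |pcF a x| ≤ A * ‖pcQ x‖ := by
  have := intervalIntegral.norm_integral_le_of_norm_le_const (a := (0:ℝ)) (b := 1)
    (C := A * ‖pcQ x‖) (f := fun t : ℝ => a (pcL t x) (pcQ x)) (fun t ht => ?_)
  · simpa [pcF] using this
  rw [uIoc_of_le zero_le_one] at ht
  exact (a (pcL t x)).le_of_opNorm_le (hA _ (hVU t (Ioc_subset_Icc_self ht) x hx)) _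

include hVU in
lemma pcAloc_norm {M : ℝ} (hM : ∀ y ∈ U, ‖β y‖ ≤ M) (x : E4) (hx : x ∈ V) :
    ‖pcAloc β x‖ ≤ M * ‖pcQ x‖ := by
  have := intervalIntegral.norm_integral_le_of_norm_le_const (a := (0:ℝ)) (b := 1)
    (C := M * ‖pcQ x‖) (f := fun t : ℝ => (β (pcL t x) (pcQ x)).comp (pcL t)) (fun t ht => ?_)
  · simpa [pcAloc] using this
  rw [uIoc_of_le zero_le_one] at ht
  have ht' := Ioc_subset_Icc_self ht
  refine (ContinuousLinearMap.opNorm_comp_le _ _).trans ?_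
  have h1 := (β (pcL t x)).le_of_opNorm_le (hM _ (hVU t ht' x hx)) (pcQ x)
  have h2 := pcL_norm_le t ht'
  calc _ ≤ ‖β (pcL t x) (pcQ x)‖ * 1 := by gcongr
    _ ≤ _ := by simpa using h1

end

/-- The cutoff function. -/
noncomputable def pcChi (s : E4 → ℝ) (x : E4) : ℝ :=
  pcPsi (‖(s (pcL 0 x))⁻¹ • pcQ x‖ ^ 2)

lemma pcChi_contDiffAt {s : E4 → ℝ} (hs : ContDiff ℝ 2 s) (x : E4) (hx : s (pcL 0 x) ≠ 0) :
    ContDiffAt ℝ 2 (pcChi s) x := by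
  unfold pcChi
  have h1 : ContDiffAt ℝ 2 (fun x => s (pcL 0 x)) x := (hs.comp (pcL 0).contDiff).contDiffAt
  exact pcPsi_contDiff.contDiffAt.comp x
    (((h1.inv hx).smul pcQ.contDiff.contDiffAt).norm_sq ℝ)

lemma pcChi_deriv {s : E4 → ℝ} (hs : ContDiff ℝ 2 s) (hs1 : ∀ x, ‖fderiv ℝ s x‖ ≤ 1)
    {K : ℝ} (hK0 : 0 ≤ K) (hK : ∀ r ∈ Icc (0:ℝ) 1, |deriv pcPsi r| ≤ K)
    (x : E4) (hx : ‖pcQ x‖ < s (pcL 0 x)) :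
    ‖pcQ x‖ * ‖fderiv ℝ (pcChi s) x‖ ≤ 4 * K := by
  set q := s (pcL 0 x) with hq
  have hq0 : 0 < q := (norm_nonneg _).trans_lt hx
  set q' : E4 →L[ℝ] ℝ := (fderiv ℝ s (pcL 0 x)).comp (pcL 0) with hq'
  have h1 : HasFDerivAt (fun y => s (pcL 0 y)) q' x :=
    ((hs.differentiable (by simp)) _).hasFDerivAt.comp x (pcL 0).hasFDerivAt
  have hq'n : ‖q'‖ ≤ 1 := (ContinuousLinearMap.opNorm_comp_le _ _).trans
    (mul_le_one₀ (hs1 _) (norm_nonneg _) (pcL_norm_le 0 (by simp)))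
  have h2 : HasFDerivAt (fun y => (s (pcL 0 y))⁻¹) ((-(q ^ 2)⁻¹) • q') x :=
    (hasDerivAt_inv hq0.ne').comp_hasFDerivAt x h1
  have h3 := (h2.smul (pcQ.hasFDerivAt (x := x))).norm_sq
  have h4 : HasDerivAt pcPsi (deriv pcPsi (‖q⁻¹ • pcQ x‖ ^ 2)) (‖q⁻¹ • pcQ x‖ ^ 2) :=
    ((pcPsi_contDiff.differentiable (by simp)) _).hasDerivAt
  have h5 : HasFDerivAt (pcChi s) _ x := h4.comp_hasFDerivAt x h3
  rw [h5.fderiv]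
  have hz : ‖q⁻¹ • pcQ x‖ = ‖pcQ x‖ / q := by
    rw [norm_smul, norm_inv, Real.norm_of_nonneg hq0.le]; ring
  set ρ := ‖pcQ x‖ / q with hρ
  have hρ0 : 0 ≤ ρ := by positivity
  have hρ1 : ρ ≤ 1 := by rw [hρ, div_le_one hq0]; exact hx.le
  have hQρ : ‖pcQ x‖ = ρ * q := by rw [hρ]; field_simp
  have hKr := hK (‖q⁻¹ • pcQ x‖ ^ 2) (by rw [hz]; exact ⟨by positivity, by nlinarith⟩)
  have hv : ∀ v : E4, ‖pcQ x‖ * ‖q⁻¹ • pcQ v + (-(q ^ 2)⁻¹ * q' v) • pcQ x‖ ≤ 2 * ‖v‖ := by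
    intro v
    have e1 : ‖q⁻¹ • pcQ v‖ ≤ q⁻¹ * ‖v‖ := by
      rw [norm_smul, norm_inv, Real.norm_of_nonneg hq0.le]
      have := pcQ_norm v
      gcongr
    have e2 : ‖(-(q ^ 2)⁻¹ * q' v) • pcQ x‖ ≤ (q ^ 2)⁻¹ * ‖v‖ * (ρ * q) := by
      rw [norm_smul, norm_mul, norm_neg, norm_inv, norm_pow, Real.norm_of_nonneg hq0.le, hQρ]
      have := q'.le_of_opNorm_le hq'n v
      rw [one_mul] at this
      gcongr
    have e3 := (norm_add_le _ _).trans (add_le_add e1 e2)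
    calc _ ≤ ‖pcQ x‖ * (q⁻¹ * ‖v‖ + (q ^ 2)⁻¹ * ‖v‖ * (ρ * q)) := by gcongr
      _ = ρ * ‖v‖ + ρ ^ 2 * ‖v‖ := by rw [hQρ]; field_simp
      _ ≤ 2 * ‖v‖ := by nlinarith [norm_nonneg v, mul_nonneg hρ0 (norm_nonneg v)]
  rw [← norm_norm (pcQ x), ← norm_smul]
  refine ContinuousLinearMap.opNorm_le_bound _ (by positivity) (fun v => ?_)
  have hw : ‖inner ℝ (q⁻¹ • pcQ x) (q⁻¹ • pcQ v + (-(q ^ 2)⁻¹ * q' v) • pcQ x)‖ ≤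
      1 * ‖q⁻¹ • pcQ v + (-(q ^ 2)⁻¹ * q' v) • pcQ x‖ := by
    refine (norm_inner_le_norm _ _).trans ?_
    rw [hz]
    gcongr
  have hfin : ‖pcQ x‖ * (|deriv pcPsi (‖q⁻¹ • pcQ x‖ ^ 2)| *
      (2 * ‖inner ℝ (q⁻¹ • pcQ x) (q⁻¹ • pcQ v + (-(q ^ 2)⁻¹ * q' v) • pcQ x)‖)) ≤
      4 * K * ‖v‖ := by
    have h7 := hv v
    calc _ ≤ ‖pcQ x‖ * (K * (2 * (1 * ‖q⁻¹ • pcQ v + (-(q ^ 2)⁻¹ * q' v) • pcQ x‖))) := by gcongr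
      _ = 2 * K * (‖pcQ x‖ * ‖q⁻¹ • pcQ v + (-(q ^ 2)⁻¹ * q' v) • pcQ x‖) := by ring
      _ ≤ 2 * K * (2 * ‖v‖) := by gcongr
      _ = _ := by ring
  refine le_of_eq_of_le ?_ hfin
  rw [smul_apply, norm_smul, norm_norm]
  congr 1
  have key : ∀ (c : ℝ) (z w : E4), ‖c * (2 * inner ℝ z w)‖ = |c| * (2 * ‖inner ℝ z w‖) := by
    intro c z w
    rw [norm_mul, norm_mul, Real.norm_eq_abs, Real.norm_two]
  rw [← key]
  congr 1
  simp only [ContinuousLinearMap.smul_apply, ContinuousLinearMap.comp_apply, innerSL_apply_apply,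
    ContinuousLinearMap.add_apply, ContinuousLinearMap.smulRight_apply, smul_eq_mul, Pi.smul_apply',
    nsmul_eq_mul, Nat.cast_ofNat, ← hq]

end pcEsec

section pcFsec
set_option maxSynthPendingDepth 3

lemma pcPsi_one (r : ℝ) (hr : r ≤ 1 / 4) : pcPsi r = 1 := by
  unfold pcPsi
  exact Real.smoothTransition.one_of_one_le (by linarith)

lemma pcPsi_zero (r : ℝ) (hr : 1 / 2 ≤ r) : pcPsi r = 0 := by
  unfold pcPsi
  exact Real.smoothTransition.zero_of_nonpos (by linarith)

lemma pcPsi_abs (r : ℝ) : |pcPsi r| ≤ 1 := by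
  unfold pcPsi
  rw [abs_of_nonneg (Real.smoothTransition.nonneg _)]
  exact Real.smoothTransition.le_one _

open Classical in
/-- The global cut-off potential. -/
noncomputable def pcG (s : E4 → ℝ) (a : E4 → E4 →L[ℝ] ℝ) (x : E4) : ℝ :=
  if ‖pcQ x‖ < s (pcL 0 x) then pcChi s x * pcF a x else 0

lemma pcG_off {U : Set E4} {s : E4 → ℝ} (hs : ContDiff ℝ 2 s) (hs0 : ∀ x, 0 ≤ s x)
    (hsU : ∀ x, x ∈ U ↔ s x ≠ 0) (a : E4 → E4 →L[ℝ] ℝ) (x : E4) (hx : x ∈ U)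
    (hxV : ¬ ‖pcQ x‖ < s (pcL 0 x)) : pcG s a =ᶠ[𝓝 x] fun _ => 0 := by
  have hc : Continuous (fun y => s (pcL 0 y)) := hs.continuous.comp (pcL 0).continuous
  have hV' : IsOpen {y : E4 | s (pcL 0 y) ^ 2 < 2 * ‖pcQ y‖ ^ 2} :=
    isOpen_lt (hc.pow 2) (continuous_const.mul ((pcQ.continuous.norm).pow 2))
  have hmem : x ∈ {y : E4 | s (pcL 0 y) ^ 2 < 2 * ‖pcQ y‖ ^ 2} := by
    have h1 : s (pcL 0 x) ≤ ‖pcQ x‖ := not_lt.1 hxV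
    have h0 := hs0 (pcL 0 x)
    have hpos : 0 < ‖pcQ x‖ := by
      rcases (norm_nonneg (pcQ x)).lt_or_eq with h | h
      · exact h
      · exfalso
        have hQ : pcQ x = 0 := norm_eq_zero.1 h.symm
        have e : pcL 0 x = x := by rw [pcL_apply, hQ]; simp
        rw [e] at h1 h0
        exact (hsU x).1 hx (le_antisymm (h1.trans_eq h.symm) h0)
    show s (pcL 0 x) ^ 2 < 2 * ‖pcQ x‖ ^ 2
    nlinarith
  filter_upwards [hV'.mem_nhds hmem] with y hy
  unfold pcG
  split_ifs with h
  · have hq : 0 < s (pcL 0 y) := (norm_nonneg _).trans_lt h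
    have hy' : s (pcL 0 y) ^ 2 < 2 * ‖pcQ y‖ ^ 2 := hy
    have : pcChi s y = 0 := by
      unfold pcChi
      apply pcPsi_zero
      rw [norm_smul, norm_inv, Real.norm_of_nonneg hq.le, mul_pow, inv_pow,
        inv_mul_eq_div, le_div_iff₀ (by positivity)]
      linarith
    rw [this, zero_mul]
  · rfl

lemma pcG_on {s : E4 → ℝ} (hs : ContDiff ℝ 2 s) (a : E4 → E4 →L[ℝ] ℝ) (x : E4)
    (hxV : ‖pcQ x‖ < s (pcL 0 x)) : pcG s a =ᶠ[𝓝 x] fun y => pcChi s y * pcF a y := by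
  have hc : Continuous (fun y => s (pcL 0 y)) := hs.continuous.comp (pcL 0).continuous
  have hV : IsOpen {y : E4 | ‖pcQ y‖ < s (pcL 0 y)} := isOpen_lt pcQ.continuous.norm hc
  filter_upwards [hV.mem_nhds hxV] with y hy
  unfold pcG
  exact if_pos hy

theorem pc_main_zero (d : ℝ) :
    ∃ C : ℝ, 0 < C ∧
      ∀ U : Set E4, IsOpen U → Bornology.IsBounded U → StarConvex ℝ 0 U →
        Metric.diam U ≤ d →
        ∀ β : E4 → E4 →L[ℝ] E4 →L[ℝ] ℝ,
          ContDiffOn ℝ 1 β U →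
          (∀ x ∈ U, ∀ u v : E4, β x u v = -β x v u) →
          (∀ x ∈ U, ∀ u v w : E4,
            fderiv ℝ β x u v w - fderiv ℝ β x v u w + fderiv ℝ β x w u v = 0) →
          (∀ x ∈ U, x 2 = 0 → x 3 = 0 →
            β x (EuclideanSpace.single (0 : Fin 4) (1:ℝ)) (EuclideanSpace.single (1 : Fin 4) (1:ℝ)) = 0) →
          ∃ α : E4 → E4 →L[ℝ] ℝ,
            ContDiffOn ℝ 0 α U ∧
            (∀ x ∈ U, ∀ u v : E4,
              fderiv ℝ α x u v - fderiv ℝ α x v u = β x u v) ∧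
            (∀ x ∈ U, x 2 = 0 → x 3 = 0 → α x = 0) ∧
            (∀ M : ℝ, (∀ x ∈ U, ‖β x‖ ≤ M) →
              ∀ x ∈ U, ‖α x‖ ≤ C * M) := by
  set D : ℝ := |d| + 1 with hDdef
  have hD : 1 ≤ D := by have := abs_nonneg d; linarith
  obtain ⟨K, hK0, hK⟩ := pcPsi_bound
  refine ⟨3 * D + 4 * K * D, by positivity, ?_⟩
  intro U hU hb hstar hd β hβ halt hcl hP
  have hUD := pc_mem_norm hb hstar hd
  obtain ⟨s, hs, hs0, hsU, hlip, hs1⟩ := pc_exists_s hU hb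
  set V : Set E4 := {y : E4 | ‖pcQ y‖ < s (pcL 0 y)} with hVdef
  have hc : Continuous (fun y => s (pcL 0 y)) := hs.continuous.comp (pcL 0).continuous
  have hV : IsOpen V := isOpen_lt pcQ.continuous.norm hc
  have hVU : ∀ t ∈ Icc (0:ℝ) 1, ∀ x ∈ V, pcL t x ∈ U := by
    intro t ht x hx
    rw [hsU]
    intro h0
    have hx' : ‖pcQ x‖ < s (pcL 0 x) := hx
    have h1 := hlip (pcL 0 x) (pcL t x)
    have h2 : pcL 0 x - pcL t x = -(t • pcQ x) := by
      rw [pcL_apply, pcL_apply, zero_smul]; abel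
    rw [h0, h2, norm_neg, norm_smul, Real.norm_of_nonneg ht.1, sub_zero] at h1
    have h3 := le_abs_self (s (pcL 0 x))
    nlinarith [norm_nonneg (pcQ x), ht.2]
  have hβn : ContDiffOn ℝ ((1 : ℕ) : WithTop ℕ∞) β U := by exact_mod_cast hβ
  have ha : ContDiffOn ℝ 1 (pcA β) U := by exact_mod_cast pcA_contDiff hU hstar hβn
  have hda := pcA_d hU hstar hβ halt hcl
  have haP := pcA_plane hstar hβ.continuousOn halt hP
  have hAl := pcAloc_contDiff hU hV hVU hβ
  have hFd := pcF_deriv hU hV hVU hβ ha hda haP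
  have hV1 : V ⊆ U := fun x hx => by
    have := hVU 1 (by simp) x hx
    rw [pcL_apply] at this
    simpa using this
  have hF : ContDiffOn ℝ 2 (pcF (pcA β)) V := by
    have : ContDiffOn ℝ (1 + 1) (pcF (pcA β)) V := by
      rw [contDiffOn_succ_iff_fderiv_of_isOpen hV]
      refine ⟨fun x hx => (hFd x hx).differentiableAt.differentiableWithinAt, by simp, ?_⟩
      exact ((ha.mono hV1).sub hAl).congr (fun x hx => (hFd x hx).fderiv)
    rwa [one_add_one_eq_two] at this
  have hChi : ∀ x ∈ V, ContDiffAt ℝ 2 (pcChi s) x := fun x hx =>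
    pcChi_contDiffAt hs x ((norm_nonneg _).trans_lt hx).ne'
  have hf : ContDiffOn ℝ 2 (pcG s (pcA β)) U := by
    intro x hx
    apply ContDiffAt.contDiffWithinAt
    by_cases h : x ∈ V
    · exact ((hChi x h).mul (hF.contDiffAt (hV.mem_nhds h))).congr_of_eventuallyEq (pcG_on hs _ x h)
    · exact contDiffAt_const.congr_of_eventuallyEq (pcG_off hs hs0 hsU _ x hx h)
  have hf1 : ∀ x ∈ V, fderiv ℝ (pcG s (pcA β)) x =
      pcChi s x • (pcA β x - pcAloc β x) + pcF (pcA β) x • fderiv ℝ (pcChi s) x := by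
    intro x hx
    rw [(pcG_on hs _ x hx).fderiv_eq]
    exact ((((hChi x hx).differentiableAt (by simp)).hasFDerivAt).mul (hFd x hx)).fderiv
  have hf0 : ∀ x ∈ U, x ∉ V → fderiv ℝ (pcG s (pcA β)) x = 0 := by
    intro x hx h
    rw [(pcG_off hs hs0 hsU _ x hx h).fderiv_eq]
    simp
  refine ⟨fun x => pcA β x - fderiv ℝ (pcG s (pcA β)) x, ?_, ?_, ?_, ?_⟩
  · rw [contDiffOn_zero]
    exact ha.continuousOn.sub (hf.continuousOn_fderiv_of_isOpen hU (by norm_num))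
  · exact pc_correct hU ha hda hf
  · intro x hx h2 h3
    have hQ := pcQ_zero x h2 h3
    have e : pcL 0 x = x := by rw [pcL_apply, hQ]; simp
    have hxV : x ∈ V := by
      show ‖pcQ x‖ < s (pcL 0 x)
      rw [e, hQ, norm_zero]
      exact lt_of_le_of_ne (hs0 x) ((hsU x).1 hx).symm
    have e1 : pcChi s x = 1 := by
      unfold pcChi
      rw [hQ]
      exact pcPsi_one _ (by simp)
    have e2 : pcF (pcA β) x = 0 := by simp [pcF, hQ]
    have e3 : pcAloc β x = 0 := by simp [pcAloc, hQ]
    beta_reduce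
    rw [hf1 x hxV, e1, e2, e3]
    simp
  · intro M hM x hx
    have hM0 : 0 ≤ M := (norm_nonneg _).trans (hM x hx)
    have hA : ∀ y ∈ U, ‖pcA β y‖ ≤ M * D := by
      intro y hy
      have := pcA_bound (n := 0) hU hstar hD hUD (hβ.of_le (by simp)) hM0
        (fun z hz i hi => by
          obtain rfl : i = 0 := by omega
          rw [norm_iteratedFDeriv_zero]
          exact hM z hz) y hy 0 le_rfl
      rw [norm_iteratedFDeriv_zero] at this
      simpa using this
    have hMD : 0 ≤ M * D := by positivity
    have hfb : ‖fderiv ℝ (pcG s (pcA β)) x‖ ≤ 2 * (M * D) + 4 * K * (M * D) := by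
      by_cases h : x ∈ V
      · rw [hf1 x h]
        refine (norm_add_le _ _).trans (add_le_add ?_ ?_)
        · rw [norm_smul]
          have c1 : ‖pcChi s x‖ ≤ 1 := pcPsi_abs _
          have c2 : ‖pcA β x - pcAloc β x‖ ≤ M * D + M * D := by
            refine (norm_sub_le _ _).trans (add_le_add (hA x hx) ?_)
            refine (pcAloc_norm hVU hM x h).trans ?_
            have := (pcQ_norm x).trans (hUD x hx)
            gcongr
          calc _ ≤ 1 * (M * D + M * D) := by gcongr
            _ = _ := by ring
        · rw [norm_smul, Real.norm_eq_abs]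
          have c1 := pcF_norm hVU hA x h
          have c2 := pcChi_deriv hs hs1 hK0 hK x h
          calc _ ≤ (M * D * ‖pcQ x‖) * ‖fderiv ℝ (pcChi s) x‖ := by gcongr
            _ = M * D * (‖pcQ x‖ * ‖fderiv ℝ (pcChi s) x‖) := by ring
            _ ≤ M * D * (4 * K) := by gcongr
            _ = _ := by ring
      · rw [hf0 x hx h, norm_zero]
        positivity
    calc _ ≤ M * D + (2 * (M * D) + 4 * K * (M * D)) :=
          (norm_sub_le _ _).trans (add_le_add (hA x hx) hfb)
      _ = _ := by ring

end pcFsec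

/-- **Poincaré lemma with constraints (Lemma 3.2 of the paper).**
For every `N` and `d` there is a constant `C = C(N, d)` with the following property.
Let `U ⊆ ℝ⁴` be open, bounded, star-shaped with respect to the origin and of diameter at
most `d`. Let `β` be a closed 2-form of class `C^{N+1}` on `U` (2-forms are encoded as maps
into continuous bilinear forms which are pointwise alternating; closedness is the vanishing
of the alternation of the Fréchet derivative) whose pull-back to the plane
`P = {x₃ = x₄ = 0}` vanishes, i.e. `β(x)(e₁, e₂) = 0` for `x ∈ U ∩ P`. Then there is a
1-form `α` of class `C^N` on `U` with `dα = β`, vanishing identically on `U ∩ P`, and with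
`‖α‖_{C^N(U)} ≤ C ‖β‖_{C^{N+1}(U)}`. -/
theorem stmt_5 (N : ℕ) (d : ℝ) :
    ∃ C : ℝ, 0 < C ∧
      ∀ U : Set E4, IsOpen U → Bornology.IsBounded U → StarConvex ℝ 0 U →
        Metric.diam U ≤ d →
        ∀ β : E4 → E4 →L[ℝ] E4 →L[ℝ] ℝ,
          ContDiffOn ℝ (N + 1) β U →
          (∀ x ∈ U, ∀ u v : E4, β x u v = -β x v u) →
          (∀ x ∈ U, ∀ u v w : E4,
            fderiv ℝ β x u v w - fderiv ℝ β x v u w + fderiv ℝ β x w u v = 0) →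
          (∀ x ∈ U, x 2 = 0 → x 3 = 0 →
            β x (EuclideanSpace.single (0 : Fin 4) (1:ℝ)) (EuclideanSpace.single (1 : Fin 4) (1:ℝ)) = 0) →
          ∃ α : E4 → E4 →L[ℝ] ℝ,
            ContDiffOn ℝ N α U ∧
            (∀ x ∈ U, ∀ u v : E4,
              fderiv ℝ α x u v - fderiv ℝ α x v u = β x u v) ∧
            (∀ x ∈ U, x 2 = 0 → x 3 = 0 → α x = 0) ∧
            (∀ M : ℝ, (∀ x ∈ U, ∀ i ≤ N + 1, ‖iteratedFDeriv ℝ i β x‖ ≤ M) →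
              ∀ x ∈ U, ∀ i ≤ N, ‖iteratedFDeriv ℝ i α x‖ ≤ C * M) := by
  rcases Nat.eq_zero_or_pos N with rfl | hN
  · obtain ⟨C, hC, h⟩ := pc_main_zero d
    refine ⟨C, hC, ?_⟩
    intro U hU hb hs hd β hβ halt hcl hP
    obtain ⟨α, h1, h2, h3, h4⟩ := h U hU hb hs hd β (by simpa using hβ) halt hcl hP
    refine ⟨α, by simpa using h1, h2, h3, ?_⟩
    intro M hM x hx i hi
    obtain rfl : i = 0 := by omega
    rw [norm_iteratedFDeriv_zero]
    refine h4 M (fun y hy => ?_) x hx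
    have := hM y hy 0 (by omega)
    rwa [norm_iteratedFDeriv_zero] at this
  · exact pc_main_pos N hN d
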